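/- Let σ(x) = (1/√(2π))·exp(−x²/2) be the Gaussian radial basis function. If a, b ∈ ℝ with a ≠ 0 satisfy σ(a·x) = b·σ(x) for all x ∈ ℝ, then a = 1 or a = −1, and b = 1. -/

import Mathlib

open Real

/-- The pair `(a, b)` intertwines the activation `σ`, in the one-dimensional case: dilating the
input by `a` scales the output by `b`. Neither `a` nor `b` is required to be invertible. -/
def Intertwines {R S : Type*} [Mul R] [Mul S] (σ : R → S) (a : R) (b : S) : Prop :=
  ∀ x, σ (a * x) = b * σ x

namespace Intertwines

theorem right_eq_one {R S : Type*} [MulZeroClass R] [MonoidWithZero S] [IsRightCancelMulZero S]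
    {σ : R → S} {a : R} {b : S} (h : Intertwines σ a b) (hσ : σ 0 ≠ 0) : b = 1 := by
  have fixed : σ 0 = b * σ 0 := by simpa only [mul_zero] using h 0
  exact (right_eq_mul₀ hσ).mp fixed

theorem left_eq_one_or_neg_one_of_radial {R S : Type*} [Ring R] [NoZeroDivisors R]
    [MonoidWithZero S] [IsRightCancelMulZero S] {f : R → S} {a : R} {b : S}
    (h : Intertwines (fun x ↦ f (x ^ 2)) a b) (hf : Set.InjOn f {t | IsSquare t})
    (hf₀ : f 0 ≠ 0) : a = 1 ∨ a = -1 := by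
  have hb : b = 1 := h.right_eq_one (by simpa using hf₀)
  have same_value : f (a ^ 2) = f (1 ^ 2) := by simpa only [hb, mul_one, one_mul] using h 1
  have same_square : a ^ 2 = 1 ^ 2 := hf (IsSquare.sq a) (IsSquare.sq 1) same_value
  exact sq_eq_one_iff.mp (same_square.trans (one_pow 2))

end Intertwines

theorem injective_const_mul_exp_neg_div {c k : ℝ} (hc : c ≠ 0) (hk : k ≠ 0) :
    Function.Injective fun t : ℝ ↦ c * exp (-t / k) := by
  intro s t (same_value : c * exp (-s / k) = c * exp (-t / k))
  have same_exponent : -s / k = -t / k := exp_injective (mul_left_cancel₀ hc same_value)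
  exact neg_injective ((div_left_inj' hk).mp same_exponent)

/-- The one-dimensional intertwiner group of the Gaussian RBF
`σ(x) = (1/√(2π))·exp(−x²/2)`: if `a ≠ 0` and `σ(a·x) = b·σ(x)` for all `x`,
then `a = 1` or `a = −1`, and `b = 1`. -/
theorem gaussian_rbf_one_dim_intertwiner (a b : ℝ) (ha : a ≠ 0)
    (h : ∀ x : ℝ,
      (1 / Real.sqrt (2 * Real.pi)) * Real.exp (-(a * x) ^ 2 / 2) =
        b * ((1 / Real.sqrt (2 * Real.pi)) * Real.exp (-x ^ 2 / 2))) :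
    (a = 1 ∨ a = -1) ∧ b = 1 := by
  let profile (t : ℝ) : ℝ := 1 / √(2 * π) * exp (-t / 2)
  have intertwines : Intertwines (fun x ↦ profile (x ^ 2)) a b := h
  have amplitude_ne_zero : 1 / √(2 * π) ≠ 0 := by positivity
  have profile_injective : profile.Injective :=
    injective_const_mul_exp_neg_div amplitude_ne_zero two_ne_zero
  have profile_ne_zero (t : ℝ) : profile t ≠ 0 := mul_ne_zero amplitude_ne_zero (exp_ne_zero _)
  exact ⟨intertwines.left_eq_one_or_neg_one_of_radial profile_injective.injOn (profile_ne_zero 0),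
    intertwines.right_eq_one (profile_ne_zero _)⟩
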